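/- Let C be a spherical fusion category over a commutative ring k and I a representative set of its simple objects. Then Σ_{j,a,b∈I} dim(a)·dim(b)·N^𝟙_{j⊗a⊗j*⊗b} = (dim(C))² in k, where the multiplicity N^𝟙_Z = rank_k Hom_C(Z, 𝟙) is regarded in k via the canonical ring map ℤ → k. -/

import Mathlib

open CategoryTheory CategoryTheory.Limits MonoidalCategory

universe v u w

/-- A pivotal category: a monoidal category in which every object is equipped with a dual
object and with evaluation/coevaluation morphisms forming a left duality and a right
duality, such that left and right duals of morphisms coincide, the left and right
monoidal constraints coincide, and the left and right evaluations of the unit coincide. -/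
class PivotalCat (C : Type u) [Category.{v} C] [MonoidalCategory C] where
  dual : C → C
  evl : ∀ X : C, dual X ⊗ X ⟶ 𝟙_ C
  coevl : ∀ X : C, 𝟙_ C ⟶ X ⊗ dual X
  evr : ∀ X : C, X ⊗ dual X ⟶ 𝟙_ C
  coevr : ∀ X : C, 𝟙_ C ⟶ dual X ⊗ X
  left_zigzag₁ : ∀ X : C,
    (λ_ X).inv ≫ (coevl X ▷ X) ≫ (α_ X (dual X) X).hom ≫ (X ◁ evl X) ≫ (ρ_ X).hom = 𝟙 X
  left_zigzag₂ : ∀ X : C,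
    (ρ_ (dual X)).inv ≫ (dual X ◁ coevl X) ≫ (α_ (dual X) X (dual X)).inv ≫
      (evl X ▷ dual X) ≫ (λ_ (dual X)).hom = 𝟙 (dual X)
  right_zigzag₁ : ∀ X : C,
    (ρ_ X).inv ≫ (X ◁ coevr X) ≫ (α_ X (dual X) X).inv ≫ (evr X ▷ X) ≫ (λ_ X).hom = 𝟙 X
  right_zigzag₂ : ∀ X : C,
    (λ_ (dual X)).inv ≫ (coevr X ▷ dual X) ≫ (α_ (dual X) X (dual X)).hom ≫
      (dual X ◁ evr X) ≫ (ρ_ (dual X)).hom = 𝟙 (dual X)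
  ldual_eq_rdual : ∀ {X Y : C} (f : X ⟶ Y),
    (ρ_ (dual Y)).inv ≫ (dual Y ◁ coevl X) ≫ (dual Y ◁ (f ▷ dual X)) ≫
      (α_ (dual Y) Y (dual X)).inv ≫ (evl Y ▷ dual X) ≫ (λ_ (dual X)).hom =
    (λ_ (dual Y)).inv ≫ (coevr X ▷ dual Y) ≫ ((dual X ◁ f) ▷ dual Y) ≫
      (α_ (dual X) Y (dual Y)).hom ≫ (dual X ◁ evr Y) ≫ (ρ_ (dual X)).hom
  constraint_eq : ∀ X Y : C,
    (ρ_ (dual X ⊗ dual Y)).inv ≫ ((dual X ⊗ dual Y) ◁ coevl (Y ⊗ X)) ≫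
      (α_ (dual X) (dual Y) ((Y ⊗ X) ⊗ dual (Y ⊗ X))).hom ≫
      (dual X ◁ (α_ (dual Y) (Y ⊗ X) (dual (Y ⊗ X))).inv) ≫
      (dual X ◁ (((α_ (dual Y) Y X).inv ≫ (evl Y ▷ X) ≫ (λ_ X).hom) ▷ dual (Y ⊗ X))) ≫
      (α_ (dual X) X (dual (Y ⊗ X))).inv ≫ (evl X ▷ dual (Y ⊗ X)) ≫ (λ_ (dual (Y ⊗ X))).hom =
    (λ_ (dual X ⊗ dual Y)).inv ≫ (coevr (Y ⊗ X) ▷ (dual X ⊗ dual Y)) ≫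
      (α_ (dual (Y ⊗ X)) (Y ⊗ X) (dual X ⊗ dual Y)).hom ≫
      (dual (Y ⊗ X) ◁ ((α_ Y X (dual X ⊗ dual Y)).hom ≫ (Y ◁ (α_ X (dual X) (dual Y)).inv) ≫
        (Y ◁ (evr X ▷ dual Y)) ≫ (Y ◁ (λ_ (dual Y)).hom) ≫ evr Y)) ≫
      (ρ_ (dual (Y ⊗ X))).hom
  ev_unit : (ρ_ (dual (𝟙_ C))).inv ≫ evl (𝟙_ C) = (λ_ (dual (𝟙_ C))).inv ≫ evr (𝟙_ C)

namespace PivotalCat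

variable {C : Type u} [Category.{v} C] [MonoidalCategory C] [PivotalCat C]

/-- The (common left = right) dual of a morphism. -/
def pdual {X Y : C} (f : X ⟶ Y) : dual Y ⟶ dual X :=
  (ρ_ (dual Y)).inv ≫ (dual Y ◁ coevl X) ≫ (dual Y ◁ (f ▷ dual X)) ≫
    (α_ (dual Y) Y (dual X)).inv ≫ (evl Y ▷ dual X) ≫ (λ_ (dual X)).hom

/-- The (common left = right) pivotal monoidal constraint `X* ⊗ Y* ⟶ (Y ⊗ X)*`. -/
def mcon (X Y : C) : dual X ⊗ dual Y ⟶ dual (Y ⊗ X) :=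
  (ρ_ (dual X ⊗ dual Y)).inv ≫ ((dual X ⊗ dual Y) ◁ coevl (Y ⊗ X)) ≫
    (α_ (dual X) (dual Y) ((Y ⊗ X) ⊗ dual (Y ⊗ X))).hom ≫
    (dual X ◁ (α_ (dual Y) (Y ⊗ X) (dual (Y ⊗ X))).inv) ≫
    (dual X ◁ (((α_ (dual Y) Y X).inv ≫ (evl Y ▷ X) ≫ (λ_ X).hom) ▷ dual (Y ⊗ X))) ≫
    (α_ (dual X) X (dual (Y ⊗ X))).inv ≫ (evl X ▷ dual (Y ⊗ X)) ≫ (λ_ (dual (Y ⊗ X))).hom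

/-- The left trace of an endomorphism. -/
def trl {X : C} (f : X ⟶ X) : 𝟙_ C ⟶ 𝟙_ C := coevr X ≫ (dual X ◁ f) ≫ evl X

/-- The right trace of an endomorphism. -/
def trr {X : C} (f : X ⟶ X) : 𝟙_ C ⟶ 𝟙_ C := coevl X ≫ (f ▷ dual X) ≫ evr X

/-- The left dimension of an object, as an endomorphism of the unit. -/
def diml (X : C) : 𝟙_ C ⟶ 𝟙_ C := trl (𝟙 X)

/-- The right dimension of an object, as an endomorphism of the unit. -/
def dimr (X : C) : 𝟙_ C ⟶ 𝟙_ C := trr (𝟙 X)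

/-- The permutation map `σ_{X,Y} : Hom(𝟙, X ⊗ Y) → Hom(𝟙, Y ⊗ X)`,
`α ↦ (ev_l X ⊗ id_{Y⊗X}) ∘ (id_{X*} ⊗ α ⊗ id_X) ∘ coev_r X`. -/
def sigmaMap (X Y : C) (a : 𝟙_ C ⟶ X ⊗ Y) : 𝟙_ C ⟶ Y ⊗ X :=
  coevr X ≫ (dual X ◁ (λ_ X).inv) ≫ (dual X ◁ (a ▷ X)) ≫ (dual X ◁ (α_ X Y X).hom) ≫
    (α_ (dual X) X (Y ⊗ X)).inv ≫ (evl X ▷ (Y ⊗ X)) ≫ (λ_ (Y ⊗ X)).hom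

end PivotalCat

/-- A pivotal category is spherical when left and right traces coincide. -/
class SphericalCat (C : Type u) [Category.{v} C] [MonoidalCategory C] [PivotalCat C] : Prop where
  tr_eq : ∀ {X : C} (f : X ⟶ X), PivotalCat.trl f = PivotalCat.trr f
/-- An object `X` of a `k`-linear category is simple if `λ ↦ λ • id_X` is a bijection
`k → End X`. -/
def IsSimpleObj (k : Type w) [CommRing k] {C : Type u} [Category.{v} C]
    [Preadditive C] [CategoryTheory.Linear k C] (X : C) : Prop :=
  Function.Bijective fun a : k => a • 𝟙 X

/-- A monoidal `k`-category: the hom-sets are `k`-modules, composition and the monoidal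
product are `k`-bilinear (all this is encoded in the instance parameters), and
`End(𝟙)` is free of rank one via `λ ↦ λ • id`. -/
class MonoidalKCat (k : Type w) [CommRing k] (C : Type u) [Category.{v} C]
    [Preadditive C] [CategoryTheory.Linear k C] [MonoidalCategory C]
    [MonoidalPreadditive C] [CategoryTheory.MonoidalLinear k C] : Prop where
  unit_free : Function.Bijective fun a : k => a • 𝟙 (𝟙_ C)

/-- The identification `End(𝟙) = k` of a monoidal `k`-category. -/
noncomputable def toScalar (k : Type w) [CommRing k] {C : Type u} [Category.{v} C]
    [Preadditive C] [CategoryTheory.Linear k C] [MonoidalCategory C]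
    [MonoidalPreadditive C] [CategoryTheory.MonoidalLinear k C] [MonoidalKCat k C]
    (f : 𝟙_ C ⟶ 𝟙_ C) : k :=
  (Equiv.ofBijective (fun a : k => a • 𝟙 (𝟙_ C))
    (MonoidalKCat.unit_free (k := k) (C := C))).symm f

/-- The left dimension of an object as an element of `k`. -/
noncomputable def sdiml (k : Type w) [CommRing k] {C : Type u} [Category.{v} C]
    [Preadditive C] [CategoryTheory.Linear k C] [MonoidalCategory C]
    [MonoidalPreadditive C] [CategoryTheory.MonoidalLinear k C] [PivotalCat C]
    [MonoidalKCat k C] (X : C) : k :=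
  toScalar k (PivotalCat.diml X)

/-- The right dimension of an object as an element of `k`. -/
noncomputable def sdimr (k : Type w) [CommRing k] {C : Type u} [Category.{v} C]
    [Preadditive C] [CategoryTheory.Linear k C] [MonoidalCategory C]
    [MonoidalPreadditive C] [CategoryTheory.MonoidalLinear k C] [PivotalCat C]
    [MonoidalKCat k C] (X : C) : k :=
  toScalar k (PivotalCat.dimr X)

/-- A pre-fusion category over `k`: a pivotal `k`-category in which every finite family of
objects has a direct sum, every object is a finite direct sum of simple objects, and there
are no nonzero morphisms between non-isomorphic simple objects. -/
class PreFusionCat (k : Type w) [CommRing k] (C : Type u) [Category.{v} C]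
    [Preadditive C] [CategoryTheory.Linear k C] [MonoidalCategory C]
    [MonoidalPreadditive C] [CategoryTheory.MonoidalLinear k C]
    [CategoryTheory.Limits.HasFiniteBiproducts C] [PivotalCat C] [MonoidalKCat k C] : Prop where
  semisimple : ∀ X : C, ∃ (n : ℕ) (obj : Fin n → C) (p : ∀ a, X ⟶ obj a) (q : ∀ a, obj a ⟶ X),
    (∀ a, IsSimpleObj k (obj a)) ∧ (∑ a, p a ≫ q a = 𝟙 X) ∧
    (∀ a, q a ≫ p a = 𝟙 (obj a)) ∧ (∀ a b, a ≠ b → q a ≫ p b = 0)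
  simple_hom_zero : ∀ {i j : C}, IsSimpleObj k i → IsSimpleObj k j →
    IsEmpty (i ≅ j) → ∀ f : i ⟶ j, f = 0

/-- A fusion category over `k`: a pre-fusion category with finitely many isomorphism
classes of simple objects. -/
class FusionCat (k : Type w) [CommRing k] (C : Type u) [Category.{v} C]
    [Preadditive C] [CategoryTheory.Linear k C] [MonoidalCategory C]
    [MonoidalPreadditive C] [CategoryTheory.MonoidalLinear k C]
    [CategoryTheory.Limits.HasFiniteBiproducts C] [PivotalCat C] [MonoidalKCat k C]
    [PreFusionCat k C] : Prop where
  finitely_many_simples : ∃ S : Set C, S.Finite ∧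
    ∀ i : C, IsSimpleObj k i → ∃ j ∈ S, Nonempty (i ≅ j)

/-- A representative set of simple objects: it contains the unit object, consists of simple
objects, and every simple object is isomorphic to exactly one of its elements. -/
def IsRepresentativeSet (k : Type w) [CommRing k] (C : Type u) [Category.{v} C]
    [Preadditive C] [CategoryTheory.Linear k C] [MonoidalCategory C] (I : Set C) : Prop :=
  (𝟙_ C) ∈ I ∧ (∀ i ∈ I, IsSimpleObj k i) ∧
    ∀ X : C, IsSimpleObj k X → ∃! i, i ∈ I ∧ Nonempty (X ≅ i)

/-- The dimension of a fusion category with (finite) representative set `I` of simple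
objects: `dim C = ∑_{i ∈ I} dim_l(i) · dim_r(i)`. -/
noncomputable def catDim (k : Type w) [CommRing k] {C : Type u} [Category.{v} C]
    [Preadditive C] [CategoryTheory.Linear k C] [MonoidalCategory C]
    [MonoidalPreadditive C] [CategoryTheory.MonoidalLinear k C] [PivotalCat C]
    [MonoidalKCat k C] (I : Finset C) : k :=
  ∑ i ∈ I, sdiml k i * sdimr k i

/-!
The left dimension of `W` can be computed from any two-sided dual of `W` whose two identifications
with `W*` agree. The pivotal axioms say that `X* ⊗ Y*` is such a dual of `Y ⊗ X` and `𝟙` one of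
`𝟙`; transposing `ev_l(X)` in both ways shows that `X` is one of `X*`. Hence `dim_l` is
multiplicative and `dim_l(X*) = dim_r(X)`.

Frobenius reciprocity turns `Hom(j ⊗ a ⊗ j* ⊗ b, 𝟙)` into `Hom(b, j ⊗ a* ⊗ j*)`. By semisimplicity
`∑ b, dim_l(b) · rank Hom(b, X) = dim_l(X)`, so the sum over `b` equals
`dim_l(j) · dim_r(a) · dim_r(j)`, and the remaining sum over `j` and `a` factors as `(dim C)²`.
-/

section Mates

variable {C : Type u} [Category.{v} C] [MonoidalCategory C]

open ExactPairing

/-- The transpose `B ⟶ A` of `f : X ⟶ Y` along pairings that exhibit `A` and `B` as right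
duals. This is `rightAdjointMate`, but with the duals read off from the expected type, so that
several duals of one object can be compared. -/
abbrev rightMate {X Y A B : C} [ExactPairing X A] [ExactPairing Y B] (f : X ⟶ Y) : B ⟶ A :=
  @rightAdjointMate C _ _ X Y ⟨A⟩ ⟨B⟩ f

/-- The transpose `B ⟶ A` of `f : X ⟶ Y` along pairings that exhibit `A` and `B` as left
duals; compare `rightMate`. -/
abbrev leftMate {X Y A B : C} [ExactPairing A X] [ExactPairing B Y] (f : X ⟶ Y) : B ⟶ A :=
  @leftAdjointMate C _ _ X Y ⟨A⟩ ⟨B⟩ f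

lemma rightMate_comp {X Y Z X' Z' : C} (Y' : C) [ExactPairing X X'] [ExactPairing Y Y']
    [ExactPairing Z Z'] (f : X ⟶ Y) (g : Y ⟶ Z) :
    (rightMate (f ≫ g) : Z' ⟶ X') = (rightMate g : Z' ⟶ Y') ≫ rightMate f :=
  @comp_rightAdjointMate C _ _ X Y Z ⟨X'⟩ ⟨Y'⟩ ⟨Z'⟩ f g

lemma leftMate_comp {X Y Z X' Z' : C} (Y' : C) [ExactPairing X' X] [ExactPairing Y' Y]
    [ExactPairing Z' Z] (f : X ⟶ Y) (g : Y ⟶ Z) :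
    (leftMate (f ≫ g) : Z' ⟶ X') = (leftMate g : Z' ⟶ Y') ≫ leftMate f :=
  @comp_leftAdjointMate C _ _ X Y Z ⟨X'⟩ ⟨Y'⟩ ⟨Z'⟩ f g

lemma coevaluation_comp_rightMate_id (X Y Z : C) [ExactPairing X Y] [ExactPairing X Z] :
    η_ X Y ≫ X ◁ (rightMate (𝟙 X) : Y ⟶ Z) = η_ X Z := by
  simpa only [id_whiskerRight, Category.comp_id] using
    @coevaluation_comp_rightAdjointMate C _ _ X X ⟨Z⟩ ⟨Y⟩ (𝟙 X)

lemma rightMate_id_comp_evaluation (X Y Z : C) [ExactPairing X Y] [ExactPairing X Z] :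
    (rightMate (𝟙 X) : Y ⟶ Z) ▷ X ≫ ε_ X Z = ε_ X Y := by
  simpa only [MonoidalCategory.whiskerLeft_id, Category.id_comp] using
    @rightAdjointMate_comp_evaluation C _ _ X X ⟨Z⟩ ⟨Y⟩ (𝟙 X)

lemma coevaluation_comp_leftMate_id (X Y Z : C) [ExactPairing Y X] [ExactPairing Z X] :
    η_ Y X ≫ (leftMate (𝟙 X) : Y ⟶ Z) ▷ X = η_ Z X := by
  simpa only [MonoidalCategory.whiskerLeft_id, Category.comp_id] using
    @coevaluation_comp_leftAdjointMate C _ _ X X ⟨Z⟩ ⟨Y⟩ (𝟙 X)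

lemma leftMate_id_comp_evaluation (X Y Z : C) [ExactPairing Y X] [ExactPairing Z X] :
    X ◁ (leftMate (𝟙 X) : Y ⟶ Z) ≫ ε_ Z X = ε_ Y X := by
  simpa only [id_whiskerRight, Category.id_comp] using
    @leftAdjointMate_comp_evaluation C _ _ X X ⟨Z⟩ ⟨Y⟩ (𝟙 X)

lemma isIso_leftMate_id (X Y Z : C) [ExactPairing Y X] [ExactPairing Z X] :
    IsIso (leftMate (𝟙 X) : Y ⟶ Z) :=
  inferInstanceAs (IsIso (leftDualIso (Y := X) (X₁ := Y) (X₂ := Z) inferInstance inferInstance).hom)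

lemma rightMate_evaluation (X Y Y' : C) [ExactPairing X Y] [ExactPairing Y Y'] :
    (rightMate (ε_ X Y) : 𝟙_ C ⟶ Y ⊗ Y') = η_ Y Y' := by
  dsimp only [rightMate, rightAdjointMate]
  rw [tensor_coevaluation]
  calc
    _ = η_ Y Y' ⊗≫ (Y ◁ η_ X Y ⊗≫ ε_ X Y ▷ Y) ▷ Y' ⊗≫ 𝟙 _ := by
      change _ ≫ _ ≫ _ ≫ _ ≫ (ρ_ (𝟙_ C)).hom ▷ _ ≫ _ = _
      monoidal
    _ = η_ Y Y' := by rw [coevaluation_evaluation'']; monoidal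

lemma leftMate_evaluation (X Y Z : C) [ExactPairing X Y] [ExactPairing Y X] [ExactPairing Z Y] :
    (leftMate (ε_ X Y) : 𝟙_ C ⟶ Y ⊗ Z) = η_ Y X ≫ Y ◁ (leftMate (𝟙 Y) : X ⟶ Z) := by
  dsimp only [leftMate, leftAdjointMate]
  rw [tensor_coevaluation]
  change _ ≫ _ ≫ _ ≫ _ ≫ _ ◁ (ρ_ (𝟙_ C)).hom ≫ _ = _
  monoidal

lemma coevaluation_comp_whiskerLeft_injective {Y Y' Z : C} [ExactPairing Y Y'] :
    Function.Injective fun f : Y' ⟶ Z => η_ Y Y' ≫ Y ◁ f := by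
  refine .of_comp (f := (tensorLeftHomEquiv (𝟙_ C) Y Y' Z).symm) fun f g h => ?_
  simpa only [Function.comp_apply, tensorLeftHomEquiv_symm_coevaluation_comp_whiskerLeft,
    cancel_epi] using h

lemma whiskerRight_comp_evaluation_injective {X Y Z : C} [ExactPairing X Y] :
    Function.Injective fun f : Z ⟶ Y => f ▷ X ≫ ε_ X Y := by
  refine .of_comp (f := tensorRightHomEquiv Z X Y (𝟙_ C)) fun f g h => ?_
  have transpose_eq (e : Z ⟶ Y) :
      tensorRightHomEquiv Z X Y (𝟙_ C) (e ▷ X ≫ ε_ X Y) = e ≫ (λ_ Y).inv :=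
    @tensorRightHomEquiv_whiskerRight_comp_evaluation C _ _ X Z ⟨Y⟩ e
  simpa only [Function.comp_apply, transpose_eq, cancel_mono] using h

end Mates

namespace PivotalCat

section Duality

variable {C : Type u} [Category.{v} C] [MonoidalCategory C] [PivotalCat C]

open ExactPairing

/-- The duality `(evl X, coevl X)`. In Mathlib's terminology it makes `dual X` a right dual of
`X`, so that left duals of morphisms become right mates. -/
instance exactPairingDual (X : C) : ExactPairing X (dual X) where
  coevaluation' := coevl X
  evaluation' := evl X
  coevaluation_evaluation' := by
    have h := left_zigzag₂ X
    rw [Iso.inv_comp_eq, Category.comp_id] at h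
    simp only [← h, Category.assoc, Iso.hom_inv_id, Category.comp_id]
  evaluation_coevaluation' := by
    have h := left_zigzag₁ X
    rw [Iso.inv_comp_eq, Category.comp_id] at h
    simp only [← h, Category.assoc, Iso.hom_inv_id, Category.comp_id]

/-- The duality `(evr X, coevr X)`, which makes `dual X` a left dual of `X`. -/
instance exactPairingDualSelf (X : C) : ExactPairing (dual X) X where
  coevaluation' := coevr X
  evaluation' := evr X
  coevaluation_evaluation' := by
    have h := right_zigzag₁ X
    rw [Iso.inv_comp_eq, Category.comp_id] at h
    simp only [← h, Category.assoc, Iso.hom_inv_id, Category.comp_id]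
  evaluation_coevaluation' := by
    have h := right_zigzag₂ X
    rw [Iso.inv_comp_eq, Category.comp_id] at h
    simp only [← h, Category.assoc, Iso.hom_inv_id, Category.comp_id]

lemma rightMate_dual_eq_leftMate {X Y : C} (f : X ⟶ Y) :
    (rightMate f : dual Y ⟶ dual X) = leftMate f :=
  ldual_eq_rdual f

lemma trl_comp_comm {X Y : C} (f : X ⟶ Y) (g : Y ⟶ X) : trl (f ≫ g) = trl (g ≫ f) := by
  have coevr_slide : coevr X ≫ dual X ◁ f = coevr Y ≫ (leftMate f : dual Y ⟶ dual X) ▷ Y :=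
    (@coevaluation_comp_leftAdjointMate C _ _ X Y ⟨dual X⟩ ⟨dual Y⟩ f).symm
  have evl_slide : (leftMate f : dual Y ⟶ dual X) ▷ X ≫ evl X = dual Y ◁ f ≫ evl Y := by
    rw [← rightMate_dual_eq_leftMate]
    exact @rightAdjointMate_comp_evaluation C _ _ X Y ⟨dual X⟩ ⟨dual Y⟩ f
  calc
    trl (f ≫ g) = (coevr X ≫ dual X ◁ f) ≫ dual X ◁ g ≫ evl X := by
      simp only [trl, MonoidalCategory.whiskerLeft_comp, Category.assoc]
    _ = coevr Y ≫ dual Y ◁ g ≫ (leftMate f : dual Y ⟶ dual X) ▷ X ≫ evl X := by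
      rw [coevr_slide, Category.assoc, whisker_exchange_assoc]
    _ = trl (g ≫ f) := by
      simp only [evl_slide, trl, MonoidalCategory.whiskerLeft_comp, Category.assoc]

/-- A two-sided dual `A` of `W` is *pivotal* if its two dualities induce the same identification
of `A` with the chosen dual `W*`, so that `A` can replace `W*` in the definition of traces. -/
def IsPivotalDual (W A : C) [ExactPairing W A] [ExactPairing A W] : Prop :=
  (rightMate (𝟙 W) : A ⟶ dual W) = leftMate (𝟙 W)

lemma IsPivotalDual.diml_eq {W A : C} [ExactPairing W A] [ExactPairing A W]
    (h : IsPivotalDual W A) : diml W = η_ A W ≫ ε_ W A := by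
  have coevr_eq : η_ A W ≫ (leftMate (𝟙 W) : A ⟶ dual W) ▷ W = coevr W :=
    coevaluation_comp_leftMate_id W A (dual W)
  have evl_eq : (rightMate (𝟙 W) : A ⟶ dual W) ▷ W ≫ evl W = ε_ W A :=
    rightMate_id_comp_evaluation W A (dual W)
  rw [diml, trl, MonoidalCategory.whiskerLeft_id, Category.id_comp, ← coevr_eq, Category.assoc,
    ← h, evl_eq]

lemma IsPivotalDual.rightMate_eq_leftMate {W A V B : C} [ExactPairing W A] [ExactPairing A W]
    [ExactPairing V B] [ExactPairing B V] (hW : IsPivotalDual W A) (hV : IsPivotalDual V B)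
    (f : W ⟶ V) : (rightMate f : B ⟶ A) = leftMate f := by
  have := isIso_leftMate_id W A (dual W)
  rw [← cancel_mono (leftMate (𝟙 W) : A ⟶ dual W)]
  calc
    (rightMate f : B ⟶ A) ≫ leftMate (𝟙 W)
      = rightMate f ≫ (rightMate (𝟙 W) : A ⟶ dual W) := by rw [hW]
    _ = (rightMate (𝟙 V) : B ⟶ dual V) ≫ rightMate f := by
        rw [← rightMate_comp, ← rightMate_comp, Category.id_comp, Category.comp_id]
    _ = (leftMate (𝟙 V) : B ⟶ dual V) ≫ leftMate f := by rw [hV, rightMate_dual_eq_leftMate]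
    _ = (leftMate f : B ⟶ A) ≫ leftMate (𝟙 W) := by
        rw [← leftMate_comp, ← leftMate_comp, Category.id_comp, Category.comp_id]

lemma isPivotalDual_unit : IsPivotalDual (𝟙_ C) (𝟙_ C) := by
  apply whiskerRight_comp_evaluation_injective (X := 𝟙_ C)
  have evl_eq : evl (𝟙_ C) = (ρ_ _).hom ≫ (λ_ _).inv ≫ evr (𝟙_ C) := by
    rw [← ev_unit, Iso.hom_inv_id_assoc]
  calc
    (rightMate (𝟙 (𝟙_ C)) : 𝟙_ C ⟶ dual (𝟙_ C)) ▷ 𝟙_ C ≫ evl (𝟙_ C)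
      = (ρ_ (𝟙_ C)).hom := rightMate_id_comp_evaluation _ _ _
    _ = 𝟙_ C ◁ (leftMate (𝟙 (𝟙_ C)) : 𝟙_ C ⟶ dual (𝟙_ C)) ≫ evr (𝟙_ C) :=
        (leftMate_id_comp_evaluation (𝟙_ C) (𝟙_ C) (dual (𝟙_ C))).symm
    _ = (leftMate (𝟙 (𝟙_ C)) : 𝟙_ C ⟶ dual (𝟙_ C)) ▷ 𝟙_ C ≫ evl (𝟙_ C) := by
        rw [evl_eq]; monoidal

lemma isPivotalDual_tensor (X Y : C) : IsPivotalDual (Y ⊗ X) (dual X ⊗ dual Y) := by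
  have rightMate_eq : (rightMate (𝟙 (Y ⊗ X)) : dual X ⊗ dual Y ⟶ dual (Y ⊗ X)) = mcon X Y := by
    dsimp only [rightMate, rightAdjointMate, mcon]
    rw [tensor_evaluation]
    change _ ≫ _ ◁ coevl _ ≫ _ ≫ _ ≫ (𝟙 _ ⊗≫ _ ◁ (evl Y ▷ X) ⊗≫ evl X) ▷ _ ≫ _ = _
    monoidal
  rw [IsPivotalDual, rightMate_eq, mcon, constraint_eq]
  dsimp only [leftMate, leftAdjointMate]
  rw [tensor_evaluation]
  change _ = _ ≫ coevr _ ▷ _ ≫ _ ≫ _ ≫ _ ◁ (𝟙 _ ⊗≫ Y ◁ (evr X ▷ _) ⊗≫ evr Y) ≫ _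
  monoidal

-- Compare the two transposes of the single morphism `evl X : X* ⊗ X ⟶ 𝟙`.
lemma isPivotalDual_dual_self (X : C) : IsPivotalDual (dual X) X := by
  apply coevaluation_comp_whiskerLeft_injective (Y := dual X)
  calc
    η_ (dual X) X ≫ dual X ◁ (rightMate (𝟙 (dual X)) : X ⟶ dual (dual X))
      = η_ (dual X) (dual (dual X)) := coevaluation_comp_rightMate_id _ _ _
    _ = rightMate (ε_ X (dual X)) := (rightMate_evaluation X _ _).symm
    _ = leftMate (ε_ X (dual X)) :=
        (isPivotalDual_tensor X (dual X)).rightMate_eq_leftMate isPivotalDual_unit _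
    _ = η_ (dual X) X ≫ dual X ◁ (leftMate (𝟙 (dual X)) : X ⟶ dual (dual X)) :=
        leftMate_evaluation X _ _

lemma diml_unit : diml (𝟙_ C) = 𝟙 (𝟙_ C) :=
  isPivotalDual_unit.diml_eq.trans (ρ_ (𝟙_ C)).inv_hom_id

lemma diml_dual (X : C) : diml (dual X) = dimr X := by
  rw [(isPivotalDual_dual_self X).diml_eq, dimr, trr, id_whiskerRight, Category.id_comp]
  rfl

lemma diml_tensor (X Y : C) :
    diml (X ⊗ Y) = coevr Y ≫ dual Y ◁ ((λ_ Y).inv ≫ diml X ▷ Y ≫ (λ_ Y).hom) ≫ evl Y := by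
  rw [(isPivotalDual_tensor Y X).diml_eq, tensor_coevaluation, tensor_evaluation]
  change (coevr Y ⊗≫ (dual Y ◁ coevr X) ▷ Y ⊗≫ 𝟙 _) ≫ 𝟙 _ ⊗≫ dual Y ◁ (evl X ▷ Y) ⊗≫ evl Y = _
  simp only [diml, trl, MonoidalCategory.whiskerLeft_id, Category.id_comp]
  monoidal

end Duality

end PivotalCat

section Scalars

variable (k : Type w) [CommRing k] {C : Type u} [Category.{v} C] [Preadditive C]
  [CategoryTheory.Linear k C] [MonoidalCategory C] [MonoidalPreadditive C]
  [CategoryTheory.MonoidalLinear k C] [MonoidalKCat k C]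

lemma toScalar_smul_id (f : 𝟙_ C ⟶ 𝟙_ C) : toScalar k f • 𝟙 (𝟙_ C) = f :=
  (Equiv.ofBijective (fun a : k => a • 𝟙 (𝟙_ C)) MonoidalKCat.unit_free).apply_symm_apply f

lemma toScalar_eq_iff {f : 𝟙_ C ⟶ 𝟙_ C} {r : k} : toScalar k f = r ↔ f = r • 𝟙 (𝟙_ C) :=
  Equiv.symm_apply_eq _

lemma toScalar_sum {ι : Type*} (s : Finset ι) (f : ι → (𝟙_ C ⟶ 𝟙_ C)) :
    toScalar k (∑ i ∈ s, f i) = ∑ i ∈ s, toScalar k (f i) := by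
  simp only [toScalar_eq_iff, Finset.sum_smul, toScalar_smul_id]

variable [PivotalCat C]

lemma diml_eq_sdiml_smul_id (X : C) : PivotalCat.diml X = sdiml k X • 𝟙 (𝟙_ C) :=
  (toScalar_smul_id k _).symm

lemma sdiml_unit : sdiml k (𝟙_ C) = 1 := by
  rw [sdiml, toScalar_eq_iff, PivotalCat.diml_unit, one_smul]

lemma sdiml_dual (X : C) : sdiml k (PivotalCat.dual X) = sdimr k X := by
  rw [sdiml, sdimr, PivotalCat.diml_dual]

lemma sdiml_tensor (X Y : C) : sdiml k (X ⊗ Y) = sdiml k X * sdiml k Y := by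
  rw [sdiml, toScalar_eq_iff, PivotalCat.diml_tensor, diml_eq_sdiml_smul_id k X, mul_smul,
    ← diml_eq_sdiml_smul_id k Y]
  simp [PivotalCat.diml, PivotalCat.trl]

lemma sdiml_congr {X Y : C} (e : X ≅ Y) : sdiml k X = sdiml k Y := by
  rw [sdiml, sdiml, PivotalCat.diml, PivotalCat.diml, ← e.hom_inv_id, PivotalCat.trl_comp_comm,
    e.inv_hom_id]

lemma sdiml_biproduct {ι : Type*} [Fintype ι] (f : ι → C) [HasBiproduct f] :
    sdiml k (⨁ f) = ∑ i, sdiml k (f i) := by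
  have trl_π_ι (i : ι) :
      PivotalCat.trl (biproduct.π f i ≫ biproduct.ι f i) = PivotalCat.diml (f i) := by
    rw [PivotalCat.trl_comp_comm, biproduct.ι_π_self, PivotalCat.diml]
  have total : ∑ i, biproduct.π f i ≫ biproduct.ι f i = 𝟙 (⨁ f) :=
    IsBilimit.total (biproduct.isBilimit f)
  simp only [sdiml, ← toScalar_sum, ← trl_π_ι]
  rw [PivotalCat.diml, ← total]
  simp only [PivotalCat.trl, whiskerLeft_sum, Preadditive.comp_sum, Preadditive.sum_comp]

end Scalars

section HomSpaces

variable (k : Type w) [CommRing k] {C : Type u} [Category.{v} C] [Preadditive C]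
  [CategoryTheory.Linear k C]

/-- Morphisms into a biproduct are families of morphisms into the summands, linearly. -/
noncomputable def homBiproductLinearEquiv {ι : Type*} (f : ι → C) [HasBiproduct f] (X : C) :
    (X ⟶ ⨁ f) ≃ₗ[k] ∀ i, X ⟶ f i where
  toFun g i := g ≫ biproduct.π f i
  invFun := biproduct.lift
  map_add' g h := by ext; simp
  map_smul' r g := by ext; simp
  left_inv g := by ext; simp
  right_inv g := by ext; simp

/-- The linear form of Frobenius reciprocity `tensorLeftHomEquiv`. -/
noncomputable def tensorLeftHomLinearEquiv [MonoidalCategory C] [MonoidalPreadditive C]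
    [CategoryTheory.MonoidalLinear k C] (X Y Y' Z : C) [ExactPairing Y Y'] :
    (Y' ⊗ X ⟶ Z) ≃ₗ[k] (X ⟶ Y ⊗ Z) where
  __ := tensorLeftHomEquiv X Y Y' Z
  map_add' f g := by simp [tensorLeftHomEquiv]
  map_smul' r f := by simp [tensorLeftHomEquiv]

lemma finrank_hom_tensor_conj_tensor_unit [MonoidalCategory C] [MonoidalPreadditive C]
    [CategoryTheory.MonoidalLinear k C] [PivotalCat C] (X Y Z : C) :
    Module.finrank k (X ⊗ Y ⊗ PivotalCat.dual X ⊗ Z ⟶ 𝟙_ C) =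
      Module.finrank k (Z ⟶ X ⊗ PivotalCat.dual Y ⊗ PivotalCat.dual X ⊗ 𝟙_ C) :=
  (tensorLeftHomLinearEquiv k _ (PivotalCat.dual X) X _ ≪≫ₗ
    tensorLeftHomLinearEquiv k _ (PivotalCat.dual Y) Y _ ≪≫ₗ
    tensorLeftHomLinearEquiv k _ X (PivotalCat.dual X) _).finrank_eq

variable {k}

/-- If `X` is simple, the multiples of an isomorphism `X ≅ Y` exhaust `Hom(X, Y)`. -/
noncomputable def IsSimpleObj.homLinearEquiv {X Y : C} (hX : IsSimpleObj k X) (e : X ≅ Y) :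
    k ≃ₗ[k] (X ⟶ Y) :=
  LinearEquiv.ofBijective (LinearMap.toSpanSingleton k (X ⟶ X) (𝟙 X)) hX ≪≫ₗ
    Linear.homCongr k (Iso.refl X) e

end HomSpaces

section PreFusion

variable {k : Type w} [CommRing k] {C : Type u} [Category.{v} C] [Preadditive C]
  [CategoryTheory.Linear k C] [MonoidalCategory C] [MonoidalPreadditive C]
  [CategoryTheory.MonoidalLinear k C] [HasFiniteBiproducts C] [PivotalCat C] [MonoidalKCat k C]
  [PreFusionCat k C]

lemma IsSimpleObj.subsingleton_hom {X Y : C} (hX : IsSimpleObj k X) (hY : IsSimpleObj k Y)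
    (h : IsEmpty (X ≅ Y)) : Subsingleton (X ⟶ Y) :=
  subsingleton_of_forall_eq 0 (PreFusionCat.simple_hom_zero hX hY h)

lemma IsSimpleObj.free_hom {X Y : C} (hX : IsSimpleObj k X) (hY : IsSimpleObj k Y) :
    Module.Free k (X ⟶ Y) := by
  rcases isEmpty_or_nonempty (X ≅ Y) with h | ⟨⟨e⟩⟩
  · have := hX.subsingleton_hom hY h
    infer_instance
  · exact Module.Free.of_equiv (hX.homLinearEquiv e)

lemma IsSimpleObj.finite_hom {X Y : C} (hX : IsSimpleObj k X) (hY : IsSimpleObj k Y) :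
    Module.Finite k (X ⟶ Y) := by
  rcases isEmpty_or_nonempty (X ≅ Y) with h | ⟨⟨e⟩⟩
  · have := hX.subsingleton_hom hY h
    infer_instance
  · exact Module.Finite.equiv (hX.homLinearEquiv e)

open Classical in
lemma IsSimpleObj.finrank_hom [Nontrivial k] {X Y : C} (hX : IsSimpleObj k X)
    (hY : IsSimpleObj k Y) :
    Module.finrank k (X ⟶ Y) = if Nonempty (X ≅ Y) then 1 else 0 := by
  split_ifs with h
  · obtain ⟨e⟩ := h
    rw [← (hX.homLinearEquiv e).finrank_eq, Module.finrank_self]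
  · have := hX.subsingleton_hom hY (not_nonempty_iff.1 h)
    exact Module.finrank_zero_of_subsingleton

lemma IsSimpleObj.finrank_hom_biproduct [Nontrivial k] {ι : Type*} [Fintype ι] {f : ι → C}
    [HasBiproduct f] {X : C} (hX : IsSimpleObj k X) (hf : ∀ i, IsSimpleObj k (f i)) :
    Module.finrank k (X ⟶ ⨁ f) = ∑ i, Module.finrank k (X ⟶ f i) := by
  have := fun i => hX.free_hom (hf i)
  have := fun i => hX.finite_hom (hf i)
  rw [(homBiproductLinearEquiv k f X).finrank_eq, Module.finrank_pi_fintype]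

variable (k) in
lemma exists_iso_biproduct_isSimpleObj (X : C) :
    ∃ (n : ℕ) (f : Fin n → C), (∀ i, IsSimpleObj k (f i)) ∧ Nonempty (X ≅ ⨁ f) := by
  obtain ⟨n, f, p, q, hf, sum_p_q, q_p_self, q_p_ne⟩ := PreFusionCat.semisimple (k := k) X
  refine ⟨n, f, hf, ⟨⟨biproduct.lift p, biproduct.desc q, ?_, ?_⟩⟩⟩
  · rw [biproduct.lift_desc, sum_p_q]
  · ext j i
    rcases eq_or_ne i j with rfl | hij
    · simp [q_p_self]
    · simp [q_p_ne i j hij, biproduct.ι_π_ne _ hij]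

lemma IsRepresentativeSet.sum_sdiml_mul_finrank_hom_of_isSimpleObj [Nontrivial k]
    {I : Finset C} (hI : IsRepresentativeSet k C ↑I) {X : C} (hX : IsSimpleObj k X) :
    ∑ i ∈ I, sdiml k i * (Module.finrank k (i ⟶ X) : k) = sdiml k X := by
  obtain ⟨-, hsimple, hrep⟩ := hI
  obtain ⟨i₀, ⟨hi₀, ⟨e⟩⟩, hunique⟩ := hrep X hX
  rw [Finset.sum_eq_single_of_mem i₀ hi₀]
  · rw [(hsimple i₀ hi₀).finrank_hom hX, if_pos ⟨e.symm⟩, Nat.cast_one, mul_one, sdiml_congr k e]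
  · intro i hi hne
    have hiX : ¬ Nonempty (i ≅ X) := fun ⟨e'⟩ => hne (hunique i ⟨hi, ⟨e'.symm⟩⟩)
    rw [(hsimple i hi).finrank_hom hX, if_neg hiX, Nat.cast_zero, mul_zero]

theorem IsRepresentativeSet.sum_sdiml_mul_finrank_hom {I : Finset C}
    (hI : IsRepresentativeSet k C ↑I) (X : C) :
    ∑ i ∈ I, sdiml k i * (Module.finrank k (i ⟶ X) : k) = sdiml k X := by
  nontriviality k
  obtain ⟨n, f, hf, ⟨e⟩⟩ := exists_iso_biproduct_isSimpleObj k X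
  have finrank_eq (i : C) (hi : i ∈ I) :
      Module.finrank k (i ⟶ X) = ∑ a, Module.finrank k (i ⟶ f a) := by
    rw [(Linear.homCongr k (Iso.refl i) e).finrank_eq, (hI.2.1 i hi).finrank_hom_biproduct hf]
  calc
    ∑ i ∈ I, sdiml k i * (Module.finrank k (i ⟶ X) : k)
      = ∑ i ∈ I, ∑ a, sdiml k i * (Module.finrank k (i ⟶ f a) : k) :=
        Finset.sum_congr rfl fun i hi => by rw [finrank_eq i hi, Nat.cast_sum, Finset.mul_sum]
    _ = ∑ a, sdiml k (f a) := by
        rw [Finset.sum_comm]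
        exact Finset.sum_congr rfl fun a _ =>
          hI.sum_sdiml_mul_finrank_hom_of_isSimpleObj (hf a)
    _ = sdiml k X := by rw [sdiml_congr k e, sdiml_biproduct]

theorem IsRepresentativeSet.sum_sdiml_mul_finrank_hom_tensor_conj {I : Finset C}
    (hI : IsRepresentativeSet k C ↑I) (j a : C) :
    ∑ b ∈ I, sdiml k b *
        (Module.finrank k ((j ⊗ a ⊗ PivotalCat.dual j ⊗ b) ⟶ 𝟙_ C) : k) =
      sdiml k j * sdimr k j * sdimr k a := by
  simp only [finrank_hom_tensor_conj_tensor_unit]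
  rw [hI.sum_sdiml_mul_finrank_hom]
  simp only [sdiml_tensor, sdiml_dual, sdiml_unit]
  ring

end PreFusion

theorem spherical_fusion_bubble_identity_squared_general (k : Type w) [CommRing k] (C : Type u)
    [Category.{v} C] [Preadditive C] [CategoryTheory.Linear k C] [MonoidalCategory C]
    [MonoidalPreadditive C] [CategoryTheory.MonoidalLinear k C]
    [CategoryTheory.Limits.HasFiniteBiproducts C] [PivotalCat C] [MonoidalKCat k C]
    [PreFusionCat k C] (I : Finset C) (hI : IsRepresentativeSet k C ↑I) :
    ∑ j ∈ I, ∑ a ∈ I, ∑ b ∈ I, sdiml k a * sdiml k b *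
        (Module.finrank k ((j ⊗ a ⊗ PivotalCat.dual j ⊗ b) ⟶ 𝟙_ C) : k) =
      catDim k I ^ 2 := by
  calc
    _ = ∑ j ∈ I, ∑ a ∈ I, (sdiml k j * sdimr k j) * (sdiml k a * sdimr k a) := by
        refine Finset.sum_congr rfl fun j _ => Finset.sum_congr rfl fun a _ => ?_
        simp only [mul_assoc]
        rw [← Finset.mul_sum, hI.sum_sdiml_mul_finrank_hom_tensor_conj]
        ring
    _ = catDim k I ^ 2 := by rw [sq, catDim, Finset.sum_mul_sum]

/-- Bubble identity (Lemma 4.3, formula (4.2)): in a spherical fusion category over `k`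
with representative set `I` of simple objects:
`∑_{j,a,b ∈ I} dim(a)·dim(b)·N^𝟙_{j⊗a⊗j*⊗b} = (dim C)²` in `k`, where the multiplicity
`N^𝟙_Z = rank_k Hom(Z, 𝟙)` is regarded in `k` via `ℤ → k`. -/
theorem spherical_fusion_bubble_identity_squared (k : Type w) [CommRing k] (C : Type u)
    [Category.{v} C] [Preadditive C] [CategoryTheory.Linear k C] [MonoidalCategory C]
    [MonoidalPreadditive C] [CategoryTheory.MonoidalLinear k C]
    [CategoryTheory.Limits.HasFiniteBiproducts C] [PivotalCat C] [MonoidalKCat k C]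
    [PreFusionCat k C] [FusionCat k C] [SphericalCat C]
    (I : Finset C) (hI : IsRepresentativeSet k C ↑I) :
    ∑ j ∈ I, ∑ a ∈ I, ∑ b ∈ I, sdiml k a * sdiml k b *
        (Module.finrank k ((j ⊗ a ⊗ PivotalCat.dual j ⊗ b) ⟶ 𝟙_ C) : k) =
      catDim k I ^ 2 :=
  spherical_fusion_bubble_identity_squared_general k C I hI
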